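/- For every integer e ≥ 5 and each i ∈ {2,3}, there exists a finite metabelian σ-group M of order 3^{6+e}, generated by two elements x and y satisfying w^3 = 1, y^3 = s₅, s₂^3 = s₄^2 s₅, s₃^3 = s₅^2, t₃ = s₃ s₅ w^{i-1}, t₄ = s₄, and t₅ = s₅, whose abelianization is isomorphic to (ZMod (3^e)) × (ZMod 3); moreover there exists a finite group G of order 3^{7+e} with the same abelianization, admitting a σ-automorphism, with second derived subgroup nontrivial and third derived subgroup trivial (derived length exactly 3), such that G/G'' is isomorphic to M. -/

import Mathlib

/-- The commutator `[a,b] = a⁻¹ * b⁻¹ * a * b`. -/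
def comm' {G : Type*} [Group G] (a b : G) : G := a⁻¹ * b⁻¹ * a * b

/-- `s₂ = [y,x]` and `s_j = [s_(j-1), x]` for `j ≥ 3`. -/
def sgen {G : Type*} [Group G] (x y : G) : ℕ → G
  | 0 => 1
  | 1 => 1
  | 2 => comm' y x
  | (n + 3) => comm' (sgen x y (n + 2)) x

/-- `t_j = [s_(j-1), y]` for `j ≥ 3`. -/
def tgenD {G : Type*} [Group G] (x y : G) (j : ℕ) : G := comm' (sgen x y (j - 1)) y

/-- `t₂ = [y,x]` and `t_j = [t_(j-1), y]` for `j ≥ 3`. -/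
def tgenB {G : Type*} [Group G] (x y : G) : ℕ → G
  | 0 => 1
  | 1 => 1
  | 2 => comm' y x
  | (n + 3) => comm' (tgenB x y (n + 2)) y

/-- A σ-group: a group admitting an automorphism acting as inversion on the
abelianization. -/
def IsSigmaGroup (G : Type*) [Group G] : Prop :=
  ∃ σ : G ≃* G, ∀ g : G, Abelianization.of (σ g) = (Abelianization.of g)⁻¹

/-- A group is metabelian if its commutator subgroup is abelian, i.e. the second
derived subgroup is trivial. -/
def IsMetabelian (G : Type*) [Group G] : Prop := derivedSeries G 2 = ⊥

/-!
The cover `G` is built on its commutator subgroup `B`, a group of order `9 ^ 3` and class two, by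
two successive cyclic extensions in the sense of Hölder: first `y` is adjoined with `y ^ 3 = s₅`,
then `x` with `x ^ 3 ^ e` central in `B`. An extension of `N` by a cyclic group of order `n` with
generator `t` is determined by the automorphism `t` induces on `N` and by `t ^ n`, so that every
relation between the `s_j` and `t_j` becomes a computation in `B`. As `B` is the commutator
subgroup of `G`, the second derived subgroup is that of `B`, which has order 3; the prescribed
relations hold modulo it, and the metabelian group is the quotient. A `σ`-automorphism inverts `x`
and `y`; it is obtained by extending an automorphism of `B` through the two cyclic extensions.
-/

/-- Hölder's data for an extension of the cyclic group of order `n` by `N`: the automorphism `σ`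
that the new generator `t` induces by `b ↦ t⁻¹ * b * t`, and the element `c` of `N` that is to be
its power `t ^ n`. -/
structure CyclicExtensionData (N : Type*) [Group N] where
  σ : MulAut N
  c : N
  n : ℕ
  σ_c : σ c = c
  σ_pow : σ ^ n = MulAut.conj c⁻¹

namespace CyclicExtensionData

open SemidirectProduct

variable {N H : Type*} [Group N] [Group H] (D : CyclicExtensionData N)

/-- The split extension of `ℤ` by `N` in which the generator `t` of `ℤ` satisfies
`t⁻¹ * b * t = σ b`. The inverse of `σ` appears since Mathlib's semidirect products act on the
left. -/
abbrev Split : Type _ := N ⋊[zpowersHom (MulAut N) D.σ⁻¹] Multiplicative ℤ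

/-- The element `c⁻¹ * t ^ n` of the split extension, which the cyclic extension makes trivial. -/
def relator : D.Split := (inl D.c)⁻¹ * inr (.ofAdd 1) ^ D.n

lemma relator_mem_center : D.relator ∈ Subgroup.center D.Split := by
  have hc (k : ℤ) : (D.σ⁻¹ ^ k) D.c = D.c :=
    Subgroup.zpow_mem (MulAction.stabilizer (MulAut N) D.c) (inv_mem D.σ_c) k
  rw [Subgroup.mem_center_iff]
  intro g
  ext1
  · simp [relator, ← map_pow, - inv_zpow', hc, D.σ_pow, mul_assoc]
  · exact mul_comm _ _

instance : (Subgroup.zpowers D.relator).Normal where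
  conj_mem a ha g := by
    have hcentral : a ∈ Subgroup.center D.Split :=
      Subgroup.zpowers_le.2 D.relator_mem_center ha
    rwa [Subgroup.mem_center_iff.1 hcentral g, mul_inv_cancel_right]

/-- Hölder's extension of the cyclic group of order `n` by `N`. -/
def Extension : Type _ := D.Split ⧸ Subgroup.zpowers D.relator

instance : Group D.Extension := inferInstanceAs (Group (D.Split ⧸ Subgroup.zpowers D.relator))

/-- The quotient map from the split extension. -/
def quotientMap : D.Split →* D.Extension := QuotientGroup.mk' _

lemma quotientMap_surjective : Function.Surjective D.quotientMap := QuotientGroup.mk'_surjective _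

lemma ker_quotientMap : D.quotientMap.ker = Subgroup.zpowers D.relator := QuotientGroup.ker_mk' _

/-- The inclusion of the base group. -/
def of : N →* D.Extension := D.quotientMap.comp inl

/-- The generator `t` of the cyclic part. -/
def gen : D.Extension := D.quotientMap (inr (.ofAdd 1))

lemma gen_pow : D.gen ^ D.n = D.of D.c :=
  (QuotientGroup.eq.2 (Subgroup.mem_zpowers D.relator)).symm

lemma inv_gen_mul_of_mul_gen (b : N) : D.gen⁻¹ * D.of b * D.gen = D.of (D.σ b) := by
  have h : (inl (D.σ b) : D.Split) = inr (.ofAdd 1)⁻¹ * inl b * inr (.ofAdd 1) := by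
    rw [← inl_aut_inv]
    simp
  simp [of, gen, h]

lemma of_mul_gen (b : N) : D.of b * D.gen = D.gen * D.of (D.σ b) := by
  rw [← inv_gen_mul_of_mul_gen]
  group

lemma gen_mul_of_pow_three (b : N) :
    (D.gen * D.of b) ^ 3 = D.gen ^ 3 * D.of (D.σ (D.σ b) * D.σ b * b) :=
  calc
    (D.gen * D.of b) ^ 3 = D.gen * (D.of b * D.gen) * (D.of b * D.gen) * D.of b := by
      simp only [pow_succ, pow_zero, one_mul, mul_assoc]
    _ = D.gen * D.gen * (D.of (D.σ b) * D.gen) * D.of (D.σ b) * D.of b := by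
      rw [of_mul_gen]
      simp only [mul_assoc]
    _ = D.gen ^ 3 * D.of (D.σ (D.σ b) * D.σ b * b) := by
      rw [of_mul_gen]
      simp only [map_mul, pow_succ, pow_zero, one_mul, mul_assoc]

lemma exists_eq_of_mul_gen_zpow (g : D.Extension) : ∃ b, ∃ k : ℤ, g = D.of b * D.gen ^ k := by
  obtain ⟨a, rfl⟩ := D.quotientMap_surjective g
  refine ⟨a.left, a.right.toAdd, ?_⟩
  have hpow : (inr (.ofAdd 1) : D.Split) ^ a.right.toAdd = inr a.right := by
    rw [← map_zpow, ← ofAdd_zsmul, zsmul_one, Int.cast_id, ofAdd_toAdd]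
  rw [of, gen, MonoidHom.comp_apply, ← map_zpow, hpow, ← map_mul, inl_left_mul_inr_right]

lemma eq_top_of_gen_mem {K : Subgroup D.Extension} (hof : ∀ b, D.of b ∈ K) (hgen : D.gen ∈ K) :
    K = ⊤ := by
  rw [eq_top_iff]
  rintro g -
  obtain ⟨b, k, rfl⟩ := D.exists_eq_of_mul_gen_zpow g
  exact mul_mem (hof b) (zpow_mem hgen k)

lemma of_mem_center {b : N} (hb : b ∈ Subgroup.center N) (hσ : D.σ b = b) :
    D.of b ∈ Subgroup.center D.Extension := by
  suffices h : Subgroup.centralizer {D.of b} = ⊤ from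
    Subgroup.mem_center_iff.2 fun g ↦
      (Subgroup.mem_centralizer_singleton_iff.1 (h ▸ Subgroup.mem_top g))
  refine D.eq_top_of_gen_mem (fun a ↦ ?_) ?_
  · rw [Subgroup.mem_centralizer_singleton_iff, ← map_mul, ← map_mul,
      Subgroup.mem_center_iff.1 hb a]
  · rw [Subgroup.mem_centralizer_singleton_iff, of_mul_gen, hσ]

variable {D} in
lemma hom_ext {f g : D.Extension →* H} (hof : f.comp D.of = g.comp D.of)
    (hgen : f D.gen = g D.gen) : f = g :=
  MonoidHom.ext fun a ↦ by
    obtain ⟨b, k, rfl⟩ := D.exists_eq_of_mul_gen_zpow a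
    simpa [hgen] using DFunLike.congr_fun hof b

section lift

variable {f : N →* H} {h : H} (hconj : ∀ b, h⁻¹ * f b * h = f (D.σ b))

include hconj in
lemma map_inv_zpow_apply (k : ℤ) (b : N) :
    f ((D.σ⁻¹ ^ k) b) = ((MulAut.conj h : MulAut H) ^ k) (f b) := by
  have hσ (b : N) : f (D.σ b) = (MulAut.conj h)⁻¹ (f b) := by simp [← hconj]
  have hσ_inv (b : N) : f (D.σ⁻¹ b) = MulAut.conj h (f b) := by
    rw [← MulAut.apply_inv_self H (MulAut.conj h) (f (D.σ⁻¹ b)), ← hσ, MulAut.apply_inv_self]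
  induction k generalizing b with
  | zero => simp
  | succ k ih => rw [zpow_add_one, MulAut.mul_apply, ih, hσ_inv, zpow_add_one, MulAut.mul_apply]
  | pred k ih =>
    rw [zpow_sub_one, MulAut.mul_apply, ih, inv_inv, hσ, zpow_sub_one, MulAut.mul_apply]

include hconj in
lemma comp_zpowersHom_inv (k : Multiplicative ℤ) :
    f.comp (zpowersHom (MulAut N) D.σ⁻¹ k).toMonoidHom =
      (MulAut.conj (zpowersHom H h k)).toMonoidHom.comp f :=
  MonoidHom.ext fun b ↦ by simpa using D.map_inv_zpow_apply hconj k.toAdd b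

variable (f h)

variable (hpow : h ^ D.n = f D.c)

/-- The homomorphism sending `b` in `N` to `f b` and the generator `t` to `h`. -/
def lift : D.Extension →* H :=
  QuotientGroup.lift _
    (SemidirectProduct.lift f (zpowersHom H h) (D.comp_zpowersHom_inv hconj)) <|
    Subgroup.zpowers_le.2 <| by simp [relator, hpow, MonoidHom.mem_ker]

@[simp] lemma lift_of (b : N) : D.lift f h hconj hpow (D.of b) = f b :=
  lift_inl f (zpowersHom H h) (D.comp_zpowersHom_inv hconj) b

@[simp] lemma lift_gen : D.lift f h hconj hpow D.gen = h :=
  (lift_inr f (zpowersHom H h) (D.comp_zpowersHom_inv hconj) _).trans (zpow_one h)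

end lift

lemma of_injective (hn : D.n ≠ 0) : Function.Injective D.of := by
  rw [injective_iff_map_eq_one]
  intro b hb
  have hmem : inl b ∈ D.quotientMap.ker := hb
  rw [ker_quotientMap] at hmem
  obtain ⟨k, hk : D.relator ^ k = inl b⟩ := hmem
  have hright : D.n = 0 ∨ k = 0 := by
    simpa [-rightHom_eq_right, relator, map_zpow] using congrArg rightHom hk
  have hk0 : k = 0 := hright.resolve_left hn
  rw [hk0, zpow_zero] at hk
  exact inl_injective (hk.symm.trans (map_one inl).symm)

/-- The projection onto the cyclic quotient. -/
def toZMod : D.Extension →* Multiplicative (ZMod D.n) :=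
  D.lift 1 (.ofAdd 1) (fun _ ↦ by simp) (by simp [← ofAdd_nsmul])

@[simp] lemma toZMod_of (b : N) : D.toZMod (D.of b) = 1 := D.lift_of ..

lemma toZMod_surjective : Function.Surjective D.toZMod := by
  intro k
  obtain ⟨m, hm⟩ := ZMod.intCast_surjective k.toAdd
  refine ⟨D.gen ^ m, ?_⟩
  simp [toZMod, ← ofAdd_zsmul, hm]

lemma ker_toZMod : D.toZMod.ker = D.of.range := by
  ext g
  constructor
  · obtain ⟨b, k, rfl⟩ := D.exists_eq_of_mul_gen_zpow g
    intro hg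
    have hk : ((k : ℤ) : ZMod D.n) = 0 := by
      simpa [toZMod, ← ofAdd_zsmul, MonoidHom.mem_ker] using hg
    obtain ⟨m, rfl⟩ := (ZMod.intCast_zmod_eq_zero_iff_dvd k D.n).1 hk
    refine ⟨b * D.c ^ m, ?_⟩
    rw [map_mul, map_zpow, zpow_mul, zpow_natCast, gen_pow]
  · rintro ⟨b, rfl⟩
    exact D.toZMod_of b

lemma card_extension (hn : D.n ≠ 0) : Nat.card D.Extension = Nat.card N * D.n := by
  rw [← D.of.range.card_mul_index, ← D.ker_toZMod, Subgroup.index_ker, D.ker_toZMod,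
    MonoidHom.range_eq_top.2 D.toZMod_surjective, Subgroup.card_top]
  congr 1
  · exact (Nat.card_congr (MonoidHom.ofInjective (D.of_injective hn)).toEquiv).symm
  · exact Nat.card_zmod D.n

section invExtend

variable (τ : N →* N) (hτ : ∀ b, D.σ (τ (D.σ b)) = τ b) (hc : τ D.c = D.c⁻¹)

/-- An endomorphism of `N` inverting `c` and conjugating `σ` to `σ⁻¹` extends to the cyclic
extension by inverting the generator. -/
def invExtend : D.Extension →* D.Extension :=
  D.lift (D.of.comp τ) D.gen⁻¹
    (fun b ↦ by
      rw [MonoidHom.comp_apply, MonoidHom.comp_apply, ← hτ, ← inv_gen_mul_of_mul_gen]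
      group)
    (by rw [inv_pow, gen_pow, MonoidHom.comp_apply, hc, map_inv])

@[simp] lemma invExtend_of (b : N) : D.invExtend τ hτ hc (D.of b) = D.of (τ b) := D.lift_of ..

@[simp] lemma invExtend_gen : D.invExtend τ hτ hc D.gen = D.gen⁻¹ := D.lift_gen ..

lemma invExtend_comp_self (hττ : τ.comp τ = .id N) :
    (D.invExtend τ hτ hc).comp (D.invExtend τ hτ hc) = .id D.Extension :=
  hom_ext
    (MonoidHom.ext fun b ↦ by simpa using congrArg D.of (DFunLike.congr_fun hττ b))
    (by simp)

end invExtend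

end CyclicExtensionData

section Commutators

open scoped commutatorElement

variable {G H : Type*} [Group G] [Group H]

lemma comm'_mem_commutator (a b : G) : comm' a b ∈ commutator G := by
  have h : comm' a b = ⁅a⁻¹, b⁻¹⁆ := by simp [comm', commutatorElement_def]
  exact h ▸ Subgroup.commutator_mem_commutator (Subgroup.mem_top _) (Subgroup.mem_top _)

lemma comm'_mem {K : Subgroup G} {a b : G} (ha : a ∈ K) (hb : b ∈ K) : comm' a b ∈ K :=
  mul_mem (mul_mem (mul_mem (inv_mem ha) (inv_mem hb)) ha) hb

lemma map_comm' (f : G →* H) (a b : G) : f (comm' a b) = comm' (f a) (f b) := by simp [comm']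

lemma map_sgen (f : G →* H) (x y : G) : ∀ j, f (sgen x y j) = sgen (f x) (f y) j
  | 0 => map_one f
  | 1 => map_one f
  | 2 => map_comm' f y x
  | j + 3 => (map_comm' f _ x).trans (congrArg (comm' · (f x)) (map_sgen f x y (j + 2)))

lemma map_tgenD (f : G →* H) (x y : G) (j : ℕ) : f (tgenD x y j) = tgenD (f x) (f y) j := by
  rw [tgenD, map_comm', map_sgen, tgenD]

lemma derivedSeries_succ_eq_map {f : H →* G} (hf : commutator G = f.range) (n : ℕ) :
    derivedSeries G (n + 1) = (derivedSeries H n).map f := by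
  induction n with
  | zero => rw [derivedSeries_zero, ← MonoidHom.range_eq_map, ← hf, derivedSeries_one]
  | succ n ih => rw [derivedSeries_succ, ih, ← Subgroup.map_commutator, derivedSeries_succ H]

lemma nonempty_abelianization_mulEquiv {A : Type*} [CommGroup A] {f : G →* A}
    (hf : Function.Surjective f) (hker : f.ker ≤ commutator G) :
    Nonempty (Abelianization G ≃* A) :=
  ⟨(QuotientGroup.quotientMulEquivOfEq <|
    (Abelianization.commutator_subset_ker f).antisymm hker).trans
      (QuotientGroup.quotientKerEquivOfSurjective f hf)⟩

lemma nonempty_abelianization_mulEquiv_abelianization {f : G →* H}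
    (hf : Function.Surjective f) (hker : f.ker ≤ commutator G) :
    Nonempty (Abelianization G ≃* Abelianization H) := by
  refine nonempty_abelianization_mulEquiv
    (f := Abelianization.of.comp f) (QuotientGroup.mk_surjective.comp hf) ?_
  have hmap : commutator H = (commutator G).map f := by
    simpa only [derivedSeries_one] using (map_derivedSeries_eq hf 1).symm
  rw [← MonoidHom.comap_ker, Abelianization.ker_of, hmap, Subgroup.comap_map_eq_self hker]

lemma isMetabelian_quotient_derivedSeries_two : IsMetabelian (G ⧸ derivedSeries G 2) := by
  rw [IsMetabelian, ← map_derivedSeries_eq (QuotientGroup.mk'_surjective _),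
    QuotientGroup.map_mk'_self]

lemma isSigmaGroup_of_closure_eq_top {S : Set G} (hS : Subgroup.closure S = ⊤) (σ : G ≃* G)
    (hσ : ∀ s ∈ S, σ s = s⁻¹) : IsSigmaGroup G := by
  have h : Abelianization.of.comp σ.toMonoidHom = invMonoidHom.comp Abelianization.of :=
    MonoidHom.eq_of_eqOn_dense hS fun s hs ↦
      (congrArg Abelianization.of (hσ s hs)).trans (map_inv _ s)
  exact ⟨σ, DFunLike.congr_fun h⟩

lemma IsSigmaGroup.quotient (hG : IsSigmaGroup G) (K : Subgroup G) [hK : K.Characteristic] :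
    IsSigmaGroup (G ⧸ K) := by
  obtain ⟨σ, hσ⟩ := hG
  refine ⟨QuotientGroup.congr K K σ (Subgroup.characteristic_iff_map_eq.1 hK σ), fun g ↦ ?_⟩
  obtain ⟨g, rfl⟩ := QuotientGroup.mk'_surjective K g
  exact congrArg (Abelianization.map (QuotientGroup.mk' K)) (hσ g)

lemma conj_eq_one_of_mem_center {a : G} (ha : a ∈ Subgroup.center G) : MulAut.conj a = 1 :=
  MulEquiv.ext fun g ↦ by simp [← Subgroup.mem_center_iff.1 ha g]

/-- An endomorphism whose cube is the identity, as an automorphism. -/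
def mulAutOfCubeEqId (f : G →* G) (hf : f.comp (f.comp f) = .id G) : MulAut G :=
  f.toMulEquiv (f.comp f) hf hf

lemma mulAutOfCubeEqId_pow_three (f : G →* G) (hf : f.comp (f.comp f) = .id G) :
    mulAutOfCubeEqId f hf ^ 3 = 1 :=
  MulEquiv.ext fun g ↦ DFunLike.congr_fun hf g

end Commutators

/-- The group `R × R × R` with multiplication twisted by the alternating cocycle
`t * (a * b' - b * a')`; in it powers are scalar multiples. -/
structure Heisenberg (R : Type*) (t : R) where
  a : R
  b : R
  c : R
deriving DecidableEq

namespace Heisenberg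

open scoped commutatorElement

section Group

variable {R : Type*} {t : R}

/-- The coordinates of an element. -/
def equivProd : Heisenberg R t ≃ R × R × R where
  toFun p := (p.a, p.b, p.c)
  invFun v := ⟨v.1, v.2.1, v.2.2⟩

lemma card_eq : Nat.card (Heisenberg R t) = Nat.card R ^ 3 := by
  rw [Nat.card_congr equivProd, Nat.card_prod, Nat.card_prod]
  ring

variable [CommRing R]

instance : Mul (Heisenberg R t) :=
  ⟨fun p q ↦ ⟨p.a + q.a, p.b + q.b, p.c + q.c + t * (p.a * q.b - p.b * q.a)⟩⟩

instance : One (Heisenberg R t) := ⟨⟨0, 0, 0⟩⟩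

instance : Inv (Heisenberg R t) := ⟨fun p ↦ ⟨-p.a, -p.b, -p.c⟩⟩

lemma one_def : (1 : Heisenberg R t) = ⟨0, 0, 0⟩ := rfl

lemma mul_def (p q : Heisenberg R t) :
    p * q = ⟨p.a + q.a, p.b + q.b, p.c + q.c + t * (p.a * q.b - p.b * q.a)⟩ := rfl

lemma inv_def (p : Heisenberg R t) : p⁻¹ = ⟨-p.a, -p.b, -p.c⟩ := rfl

instance : Group (Heisenberg R t) :=
  Group.ofLeftAxioms
    (fun p q r ↦ by
      simp only [mul_def, mk.injEq]
      exact ⟨by ring, by ring, by ring⟩)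
    (fun p ↦ by simp [mul_def, one_def])
    (fun p ↦ by simp [mul_def, one_def, inv_def, mul_comm])

lemma zpow_def (p : Heisenberg R t) (k : ℤ) : p ^ k = ⟨k * p.a, k * p.b, k * p.c⟩ := by
  induction k with
  | zero => simp [one_def]
  | succ k ih =>
    rw [zpow_add_one, ih, mul_def, mk.injEq]
    push_cast
    exact ⟨by ring, by ring, by ring⟩
  | pred k ih =>
    rw [zpow_sub_one, ih, mul_def, inv_def, mk.injEq]
    push_cast
    exact ⟨by ring, by ring, by ring⟩

lemma mem_center_of {p : Heisenberg R t} (ha : 2 * t * p.a = 0) (hb : 2 * t * p.b = 0) :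
    p ∈ Subgroup.center (Heisenberg R t) := by
  refine Subgroup.mem_center_iff.2 fun q ↦ ?_
  simp only [mul_def, mk.injEq]
  exact ⟨add_comm .., add_comm .., by linear_combination q.a * hb - q.b * ha⟩

lemma commutatorElement_eq (p q : Heisenberg R t) :
    ⁅p, q⁆ = ⟨0, 0, 2 * t * (p.a * q.b - p.b * q.a)⟩ := by
  simp only [commutatorElement_def, mul_def, inv_def, mk.injEq]
  exact ⟨by ring, by ring, by ring⟩

/-- The homomorphism `r ↦ (0, 0, 2tr)`, whose range is the commutator subgroup. -/
def commutatorHom (R : Type*) [CommRing R] (t : R) : Multiplicative R →* Heisenberg R t where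
  toFun r := ⟨0, 0, 2 * t * r.toAdd⟩
  map_one' := by simp [one_def]
  map_mul' r s := by simp [mul_def, mul_add]

lemma commutator_eq_range : commutator (Heisenberg R t) = (commutatorHom R t).range := by
  apply le_antisymm
  · rw [commutator_def, Subgroup.commutator_le]
    rintro p - q -
    exact ⟨.ofAdd (p.a * q.b - p.b * q.a), (commutatorElement_eq p q).symm⟩
  · rintro _ ⟨r, rfl⟩
    have h : commutatorHom R t r = ⁅(⟨1, 0, 0⟩ : Heisenberg R t), ⟨0, r.toAdd, 0⟩⁆ := by
      simp [commutatorElement_eq, commutatorHom]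
    exact h ▸ Subgroup.commutator_mem_commutator (Subgroup.mem_top _) (Subgroup.mem_top _)

lemma isMetabelian : IsMetabelian (Heisenberg R t) := by
  rw [IsMetabelian, derivedSeries_succ, derivedSeries_one, commutator_eq_range, eq_bot_iff,
    Subgroup.commutator_le]
  rintro _ ⟨r, rfl⟩ _ ⟨s, rfl⟩
  simp [commutatorElement_eq, commutatorHom, one_def]

/-- The endomorphism acting by the matrix `M` on `(a, b)`, hence by its determinant on the centre,
and adding the linear form `l` of `(a, b)` to the last coordinate. -/
def endOfMatrix (M : Matrix (Fin 2) (Fin 2) R) (l : Fin 2 → R) :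
    Heisenberg R t →* Heisenberg R t where
  toFun p := ⟨M 0 0 * p.a + M 0 1 * p.b, M 1 0 * p.a + M 1 1 * p.b,
    (M 0 0 * M 1 1 - M 0 1 * M 1 0) * p.c + l 0 * p.a + l 1 * p.b⟩
  map_one' := by simp [one_def]
  map_mul' p q := by
    simp only [mul_def, mk.injEq]
    exact ⟨by ring, by ring, by ring⟩

end Group

variable {n : ℕ} {t : ZMod n}

lemma closure_eq_top :
    Subgroup.closure {⟨1, 0, 0⟩, ⟨0, 1, 0⟩, (⟨0, 0, 1⟩ : Heisenberg (ZMod n) t)} = ⊤ := by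
  rw [eq_top_iff]
  rintro ⟨a, b, c⟩ -
  obtain ⟨i, rfl⟩ := ZMod.intCast_surjective a
  obtain ⟨j, rfl⟩ := ZMod.intCast_surjective b
  obtain ⟨k, hk⟩ := ZMod.intCast_surjective (c - t * ((i : ZMod n) * (j : ZMod n)))
  have h : (⟨i, j, c⟩ : Heisenberg (ZMod n) t) =
      ⟨1, 0, 0⟩ ^ i * ⟨0, 1, 0⟩ ^ j * ⟨0, 0, 1⟩ ^ k := by
    simp [zpow_def, mul_def, hk]
  rw [h]
  exact mul_mem (mul_mem (zpow_mem (Subgroup.subset_closure (by simp)) i)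
    (zpow_mem (Subgroup.subset_closure (by simp)) j))
    (zpow_mem (Subgroup.subset_closure (by simp)) k)

lemma hom_ext {H : Type*} [Group H] {f g : Heisenberg (ZMod n) t →* H}
    (ha : f ⟨1, 0, 0⟩ = g ⟨1, 0, 0⟩) (hb : f ⟨0, 1, 0⟩ = g ⟨0, 1, 0⟩)
    (hc : f ⟨0, 0, 1⟩ = g ⟨0, 0, 1⟩) : f = g :=
  MonoidHom.eq_of_eqOn_dense closure_eq_top (by simp [Set.EqOn, ha, hb, hc])

end Heisenberg

namespace C4

open CyclicExtensionData

/-- The group that becomes the commutator subgroup of the cover. In its coordinates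
`s₂ = (1, 0, 0)`, `s₃ = (0, 1, 0)`, `s₄ = (6, 6, 6)`, `s₅ = (0, 6, 0)` and `t₃ = (0, 7, 1)`. -/
abbrev Base : Type := Heisenberg (ZMod 9) 3

/-- The action `b ↦ x⁻¹ * b * x` of the first generator; the coefficients are those of the images
`s₂ * s₃` of `s₂` and `s₃ * s₄` of `s₃`. -/
def conjX : MulAut Base :=
  mulAutOfCubeEqId (Heisenberg.endOfMatrix !![1, 6; 1, 7] ![3, 6])
    (Heisenberg.hom_ext (by decide) (by decide) (by decide))

/-- The action `b ↦ y⁻¹ * b * y` of the second generator; the coefficients are those of the images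
`s₂ * t₃` of `s₂` and `s₃ * t₄` of `s₃`, where `t₄ = (6, 6, 0)`. -/
def conjY : MulAut Base :=
  mulAutOfCubeEqId (Heisenberg.endOfMatrix !![1, 6; 7, 7] ![4, 0])
    (Heisenberg.hom_ext (by decide) (by decide) (by decide))

/-- The restriction to the base of the `σ`-automorphism inverting `x` and `y`; it sends `s₂` to
`[y⁻¹, x⁻¹]` and `s₃` to `[y⁻¹, x⁻¹, x⁻¹]`. -/
def inversion : Base →* Base := Heisenberg.endOfMatrix !![1, 0; 4, -1] ![8, 0]

lemma conjX_central (u : ZMod 9) : conjX ⟨0, 0, u⟩ = ⟨0, 0, u⟩ := by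
  revert u
  decide

lemma conjY_central (u : ZMod 9) : conjY ⟨0, 0, u⟩ = ⟨0, 0, u⟩ := by
  revert u
  decide

lemma conj_conjY_conjX (b : Base) :
    (⟨1, 0, 0⟩ : Base)⁻¹ * conjY (conjX b) * ⟨1, 0, 0⟩ = conjX (conjY b) := by
  have h : (MulAut.conj (⟨1, 0, 0⟩ : Base)⁻¹ * conjY * conjX).toMonoidHom =
      (conjX * conjY).toMonoidHom :=
    Heisenberg.hom_ext (by decide) (by decide) (by decide)
  simpa using DFunLike.congr_fun h b


/-- The extension of the base by `y`, where `y ^ 3 = s₅`. -/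
def yData : CyclicExtensionData Base where
  σ := conjY
  c := ⟨0, 6, 0⟩
  n := 3
  σ_c := by decide
  σ_pow := by
    have hc : (⟨0, 6, 0⟩ : Base) ∈ Subgroup.center Base :=
      Heisenberg.mem_center_of (by decide) (by decide)
    rw [conj_eq_one_of_mem_center (inv_mem hc), conjY, mulAutOfCubeEqId_pow_three]

lemma inv_gen_mul_of_conjX_mul (b : Base) :
    (yData.gen * yData.of ⟨1, 0, 0⟩)⁻¹ * yData.of (conjX b) * (yData.gen * yData.of ⟨1, 0, 0⟩) =
      yData.of (conjX (conjY b)) :=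
  calc
    (yData.gen * yData.of ⟨1, 0, 0⟩)⁻¹ * yData.of (conjX b) * (yData.gen * yData.of ⟨1, 0, 0⟩)
      = (yData.of ⟨1, 0, 0⟩)⁻¹ * (yData.gen⁻¹ * yData.of (conjX b) * yData.gen) *
          yData.of ⟨1, 0, 0⟩ := by group
    _ = (yData.of ⟨1, 0, 0⟩)⁻¹ * yData.of (conjY (conjX b)) * yData.of ⟨1, 0, 0⟩ := by
      rw [inv_gen_mul_of_mul_gen]
      rfl
    _ = yData.of (conjX (conjY b)) := by
      rw [← conj_conjY_conjX, map_mul, map_mul, map_inv]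

lemma gen_mul_of_pow_three_eq_of_conjX :
    (yData.gen * yData.of ⟨1, 0, 0⟩) ^ 3 = yData.of (conjX ⟨0, 6, 0⟩) := by
  have hnorm : conjY (conjY ⟨1, 0, 0⟩) * conjY ⟨1, 0, 0⟩ * ⟨1, 0, 0⟩ = 1 := by decide
  have hc : conjX ⟨0, 6, 0⟩ = ⟨0, 6, 0⟩ := by decide
  calc
    (yData.gen * yData.of ⟨1, 0, 0⟩) ^ 3 = yData.gen ^ yData.n * yData.of 1 :=
      (yData.gen_mul_of_pow_three _).trans (congrArg (_ * yData.of ·) hnorm)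
    _ = yData.of (conjX ⟨0, 6, 0⟩) := by
      rw [map_one, mul_one, gen_pow, hc]
      rfl

/-- The action of `x` on the extension by `y`, determined by `s₂ = [y, x] = (1, 0, 0)`. -/
def conjXHom : yData.Extension →* yData.Extension :=
  yData.lift (yData.of.comp conjX.toMonoidHom) (yData.gen * yData.of ⟨1, 0, 0⟩)
    inv_gen_mul_of_conjX_mul gen_mul_of_pow_three_eq_of_conjX

@[simp] lemma conjXHom_of (b : Base) : conjXHom (yData.of b) = yData.of (conjX b) :=
  yData.lift_of ..

@[simp] lemma conjXHom_gen : conjXHom yData.gen = yData.gen * yData.of ⟨1, 0, 0⟩ :=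
  yData.lift_gen ..

lemma conjXHom_cube : conjXHom.comp (conjXHom.comp conjXHom) = .id yData.Extension := by
  have hnorm : (⟨1, 0, 0⟩ : Base) * (conjX ⟨1, 0, 0⟩ * conjX (conjX ⟨1, 0, 0⟩)) = 1 := by decide
  apply hom_ext
  · ext b
    have hb : conjX (conjX (conjX b)) = b :=
      DFunLike.congr_fun (show conjX ^ 3 = 1 from mulAutOfCubeEqId_pow_three ..) b
    simp [hb]
  · calc
      conjXHom (conjXHom (conjXHom yData.gen)) = yData.gen * (yData.of ⟨1, 0, 0⟩ *
          (yData.of (conjX ⟨1, 0, 0⟩) * yData.of (conjX (conjX ⟨1, 0, 0⟩)))) := by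
        simp only [conjXHom_gen, map_mul, conjXHom_of, mul_assoc]
      _ = yData.gen := by rw [← map_mul, ← map_mul, hnorm, map_one, mul_one]

/-- The action of `x` on the extension by `y`, as an automorphism. -/
def conjXExtension : MulAut yData.Extension := mulAutOfCubeEqId conjXHom conjXHom_cube

section Cover

variable (e : ℕ) [NeZero e] (u : ZMod 9)

/-- The further extension by `x`, where `w = x ^ 3 ^ e` is `(0, 0, u)`. -/
def xData : CyclicExtensionData yData.Extension where
  σ := conjXExtension
  c := yData.of ⟨0, 0, u⟩
  n := 3 ^ e
  σ_c := (conjXHom_of _).trans (congrArg yData.of (conjX_central u))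
  σ_pow := by
    have hc : yData.of ⟨0, 0, u⟩ ∈ Subgroup.center yData.Extension :=
      yData.of_mem_center (Heisenberg.mem_center_of (mul_zero _) (mul_zero _)) (conjY_central u)
    rw [conj_eq_one_of_mem_center (inv_mem hc), conjXExtension,
      ← Nat.succ_pred_eq_of_ne_zero (NeZero.ne e), pow_succ', pow_mul,
      mulAutOfCubeEqId_pow_three, one_pow]

/-- The cover of the metabelian group: two cyclic extensions on top of the base. -/
abbrev Cover : Type := (xData e u).Extension

/-- The generator `x` of the cover. -/
def x : Cover e u := (xData e u).gen

/-- The generator `y` of the cover. -/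
def y : Cover e u := (xData e u).of yData.gen

/-- The inclusion of the base in the cover. -/
def ι : Base →* Cover e u := (xData e u).of.comp yData.of

variable {e u}

lemma ι_injective : Function.Injective (ι e u) :=
  ((xData e u).of_injective (by simp [xData])).comp (yData.of_injective (by simp [yData]))

lemma card_cover : Nat.card (Cover e u) = 3 ^ (7 + e) := by
  have hy : yData.n = 3 := rfl
  have hx : (xData e u).n = 3 ^ e := rfl
  rw [card_extension _ (by simp [hx]), card_extension _ (by simp [hy]), Heisenberg.card_eq,
    Nat.card_zmod, hx, hy, pow_add]
  rfl



lemma inv_x_mul_ι_mul_x (b : Base) : (x e u)⁻¹ * ι e u b * x e u = ι e u (conjX b) :=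
  ((xData e u).inv_gen_mul_of_mul_gen (yData.of b)).trans
    (congrArg (xData e u).of (conjXHom_of b))

lemma inv_y_mul_ι_mul_y (b : Base) : (y e u)⁻¹ * ι e u b * y e u = ι e u (conjY b) :=
  congrArg (xData e u).of (yData.inv_gen_mul_of_mul_gen b)

lemma comm'_ι_x (b : Base) : comm' (ι e u b) (x e u) = ι e u (b⁻¹ * conjX b) := by
  rw [map_mul, map_inv, ← inv_x_mul_ι_mul_x, comm']
  simp only [mul_assoc]

lemma comm'_ι_y (b : Base) : comm' (ι e u b) (y e u) = ι e u (b⁻¹ * conjY b) := by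
  rw [map_mul, map_inv, ← inv_y_mul_ι_mul_y, comm']
  simp only [mul_assoc]

lemma x_pow : x e u ^ 3 ^ e = ι e u ⟨0, 0, u⟩ := (xData e u).gen_pow

lemma y_pow_three : y e u ^ 3 = ι e u ⟨0, 6, 0⟩ := congrArg (xData e u).of yData.gen_pow

lemma sgen_two : sgen (x e u) (y e u) 2 = ι e u ⟨1, 0, 0⟩ := by
  have h : (x e u)⁻¹ * y e u * x e u = y e u * ι e u ⟨1, 0, 0⟩ :=
    ((xData e u).inv_gen_mul_of_mul_gen yData.gen).trans
      ((congrArg (xData e u).of conjXHom_gen).trans (map_mul ..))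
  rw [sgen, comm', mul_assoc (_ * _), mul_assoc, ← mul_assoc _ (y e u), h, inv_mul_cancel_left]

lemma sgen_three : sgen (x e u) (y e u) 3 = ι e u ⟨0, 1, 0⟩ := by
  rw [sgen, sgen_two, comm'_ι_x]
  exact congrArg _ (by decide)

lemma sgen_four : sgen (x e u) (y e u) 4 = ι e u ⟨6, 6, 6⟩ := by
  rw [sgen, sgen_three, comm'_ι_x]
  exact congrArg _ (by decide)

lemma sgen_five : sgen (x e u) (y e u) 5 = ι e u ⟨0, 6, 0⟩ := by
  rw [sgen, sgen_four, comm'_ι_x]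
  exact congrArg _ (by decide)

lemma tgenD_three : tgenD (x e u) (y e u) 3 = ι e u ⟨0, 7, 1⟩ := by
  rw [tgenD, sgen_two, comm'_ι_y]
  exact congrArg _ (by decide)

lemma tgenD_four : tgenD (x e u) (y e u) 4 = ι e u ⟨6, 6, 0⟩ := by
  rw [tgenD, sgen_three, comm'_ι_y]
  exact congrArg _ (by decide)

lemma tgenD_five : tgenD (x e u) (y e u) 5 = ι e u ⟨0, 6, 6⟩ := by
  rw [tgenD, sgen_four, comm'_ι_y]
  exact congrArg _ (by decide)

variable (e u)

/-- The projection of the cover onto its abelianization, of type `(3 ^ e, 3)`. -/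
def toAbelian : Cover e u →* Multiplicative (ZMod (3 ^ e)) × Multiplicative (ZMod 3) :=
  (xData e u).toZMod.prod <|
    (xData e u).lift yData.toZMod 1
      (fun h ↦ by
        have hcomp : yData.toZMod.comp conjXHom = yData.toZMod :=
          hom_ext (by ext b; simp) (by simp)
        rw [inv_one, one_mul, mul_one]
        exact (DFunLike.congr_fun hcomp h).symm)
      (by rw [one_pow]; exact (yData.toZMod_of _).symm)

variable {e u}

lemma toAbelian_of (h : yData.Extension) :
    toAbelian e u ((xData e u).of h) = (1, yData.toZMod h) :=
  Prod.ext ((xData e u).toZMod_of h) ((xData e u).lift_of ..)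

lemma toAbelian_surjective : Function.Surjective (toAbelian e u) := by
  rintro ⟨i, j⟩
  obtain ⟨g, hg⟩ := (xData e u).toZMod_surjective i
  obtain ⟨h, hh⟩ := yData.toZMod_surjective ((toAbelian e u g).2⁻¹ * j)
  refine ⟨g * (xData e u).of h, ?_⟩
  rw [map_mul, toAbelian_of, hh]
  exact Prod.ext ((mul_one _).trans hg) (mul_inv_cancel_left _ j)

lemma ker_toAbelian_le : (toAbelian e u).ker ≤ (ι e u).range := by
  intro g hg
  have hgx : g ∈ (xData e u).toZMod.ker := congrArg Prod.fst hg
  obtain ⟨h, rfl⟩ := (xData e u).ker_toZMod ▸ hgx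
  have hhy : h ∈ yData.toZMod.ker := congrArg Prod.snd ((toAbelian_of h).symm.trans hg)
  obtain ⟨b, rfl⟩ := yData.ker_toZMod ▸ hhy
  exact ⟨b, rfl⟩

lemma range_ι_le {K : Subgroup (Cover e u)} (hs₂ : sgen (x e u) (y e u) 2 ∈ K)
    (hs₃ : sgen (x e u) (y e u) 3 ∈ K) (ht₃ : tgenD (x e u) (y e u) 3 ∈ K) :
    (ι e u).range ≤ K := by
  have hcentral : (⟨0, 0, 1⟩ : Base) = ⟨0, 1, 0⟩ ^ 2 * ⟨0, 7, 1⟩ := by decide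
  rw [sgen_two] at hs₂
  rw [sgen_three] at hs₃
  rw [tgenD_three] at ht₃
  rw [MonoidHom.range_eq_map, ← Heisenberg.closure_eq_top, Subgroup.map_le_iff_le_comap,
    Subgroup.closure_le]
  rintro b (rfl | rfl | rfl)
  · exact hs₂
  · exact hs₃
  · rw [hcentral]
    exact mul_mem (pow_mem (show _ ∈ K.comap (ι e u) from hs₃) 2) ht₃

lemma range_ι_le_commutator : (ι e u).range ≤ commutator (Cover e u) :=
  range_ι_le (comm'_mem_commutator _ _) (comm'_mem_commutator _ _) (comm'_mem_commutator _ _)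

lemma commutator_cover : commutator (Cover e u) = (ι e u).range := by
  refine le_antisymm (fun g hg ↦ ?_) range_ι_le_commutator
  exact ker_toAbelian_le (Abelianization.commutator_subset_ker _ hg)

lemma nonempty_abelianization_cover :
    Nonempty (Abelianization (Cover e u) ≃* Multiplicative (ZMod (3 ^ e) × ZMod 3)) := by
  obtain ⟨f⟩ := nonempty_abelianization_mulEquiv toAbelian_surjective
    (ker_toAbelian_le.trans (range_ι_le_commutator (e := e) (u := u)))
  exact ⟨f.trans (MulEquiv.prodMultiplicative _ _).symm⟩

lemma closure_x_y : Subgroup.closure {x e u, y e u} = ⊤ := by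
  set K := Subgroup.closure {x e u, y e u}
  have hx : x e u ∈ K := Subgroup.subset_closure (Set.mem_insert _ _)
  have hy : y e u ∈ K := Subgroup.subset_closure (Set.mem_insert_of_mem _ rfl)
  have hs₂ : sgen (x e u) (y e u) 2 ∈ K := comm'_mem hy hx
  have hι : (ι e u).range ≤ K := range_ι_le hs₂ (comm'_mem hs₂ hx) (comm'_mem hs₂ hy)
  refine (xData e u).eq_top_of_gen_mem (fun h ↦ ?_) hx
  have htop : K.comap (xData e u).of = ⊤ := yData.eq_top_of_gen_mem (fun b ↦ hι ⟨b, rfl⟩) hy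
  exact Subgroup.mem_comap.1 (htop.symm ▸ Subgroup.mem_top h)

/-- The restriction of the `σ`-automorphism to the extension by `y`, inverting `y`. -/
def inversionY : yData.Extension →* yData.Extension :=
  yData.invExtend inversion
    (fun b ↦ by
      have h : (conjY.toMonoidHom.comp (inversion.comp conjY.toMonoidHom)) = inversion :=
        Heisenberg.hom_ext (by decide) (by decide) (by decide)
      exact DFunLike.congr_fun h b)
    (by decide)

lemma inversionY_comp_self : inversionY.comp inversionY = .id yData.Extension :=
  yData.invExtend_comp_self _ _ _ (Heisenberg.hom_ext (by decide) (by decide) (by decide))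

@[simp] lemma inversionY_of (b : Base) : inversionY (yData.of b) = yData.of (inversion b) :=
  yData.invExtend_of ..

@[simp] lemma inversionY_gen : inversionY yData.gen = yData.gen⁻¹ := yData.invExtend_gen ..

lemma conjXHom_inversionY_conjXHom (h : yData.Extension) :
    conjXHom (inversionY (conjXHom h)) = inversionY h := by
  have hbase : conjX.toMonoidHom.comp (inversion.comp conjX.toMonoidHom) = inversion :=
    Heisenberg.hom_ext (by decide) (by decide) (by decide)
  have hs₂ : conjY (conjX (inversion ⟨1, 0, 0⟩)) = ⟨1, 0, 0⟩ := by decide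
  have hgen : (yData.gen * yData.of ⟨1, 0, 0⟩)⁻¹ * yData.of (conjX (inversion ⟨1, 0, 0⟩)) =
      yData.gen⁻¹ := by
    have hcomm : yData.of (conjX (inversion ⟨1, 0, 0⟩)) * yData.gen =
        yData.gen * yData.of ⟨1, 0, 0⟩ :=
      (yData.of_mul_gen _).trans (congrArg (_ * yData.of ·) hs₂)
    rw [inv_mul_eq_iff_eq_mul, ← hcomm, mul_inv_cancel_right]
  have hcomp : conjXHom.comp (inversionY.comp conjXHom) = inversionY :=
    hom_ext
      (MonoidHom.ext fun b ↦ by simpa using congrArg yData.of (DFunLike.congr_fun hbase b))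
      (by simpa using hgen)
  exact DFunLike.congr_fun hcomp h

lemma isSigmaGroup_cover : IsSigmaGroup (Cover e u) := by
  have hc : inversionY (yData.of ⟨0, 0, u⟩) = (yData.of ⟨0, 0, u⟩)⁻¹ := by
    have hu : inversion ⟨0, 0, u⟩ = ⟨0, 0, u⟩⁻¹ := by
      revert u
      decide
    rw [inversionY_of, hu, map_inv]
  let τ : Cover e u →* Cover e u :=
    (xData e u).invExtend inversionY conjXHom_inversionY_conjXHom hc
  have hτ : τ.comp τ = .id (Cover e u) :=
    (xData e u).invExtend_comp_self _ _ _ inversionY_comp_self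
  have hx : τ (x e u) = (x e u)⁻¹ := (xData e u).invExtend_gen ..
  have hy : τ (y e u) = (y e u)⁻¹ :=
    ((xData e u).invExtend_of _ _ _ yData.gen).trans <|
      (congrArg (xData e u).of inversionY_gen).trans (map_inv ..)
  refine isSigmaGroup_of_closure_eq_top closure_x_y (τ.toMulEquiv τ hτ hτ) ?_
  rintro _ (rfl | rfl)
  exacts [hx, hy]

lemma derivedSeries_cover_two : derivedSeries (Cover e u) 2 = (commutator Base).map (ι e u) := by
  rw [derivedSeries_succ_eq_map commutator_cover, derivedSeries_one]

lemma derivedSeries_cover_three : derivedSeries (Cover e u) 3 = ⊥ := by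
  have hBase : derivedSeries Base 2 = ⊥ := Heisenberg.isMetabelian
  rw [derivedSeries_succ_eq_map commutator_cover, hBase, Subgroup.map_bot]

lemma card_derivedSeries_cover_two : Nat.card (derivedSeries (Cover e u) 2) = 3 := by
  rw [derivedSeries_cover_two, Subgroup.card_map_of_injective ι_injective,
    Heisenberg.commutator_eq_range, Nat.card_eq_fintype_card]
  decide

variable (e u)

/-- The metabelian group: the quotient of the cover by its second derived subgroup. -/
abbrev Ground : Type := Cover e u ⧸ derivedSeries (Cover e u) 2

namespace Ground

/-- The generator `x` of the metabelian group. -/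
def x : Ground e u := (C4.x e u : Cover e u)

/-- The generator `y` of the metabelian group. -/
def y : Ground e u := (C4.y e u : Cover e u)

/-- The map from the base to the metabelian group. -/
def β : Base →* Ground e u := (QuotientGroup.mk' _).comp (ι e u)

variable {e u}

lemma closure_x_y : Subgroup.closure {x e u, y e u} = ⊤ := by
  have h := congrArg (Subgroup.map (QuotientGroup.mk' (derivedSeries (Cover e u) 2)))
    (C4.closure_x_y (e := e) (u := u))
  rwa [MonoidHom.map_closure, Set.image_pair,
    Subgroup.map_top_of_surjective _ (QuotientGroup.mk'_surjective _)] at h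

lemma card_ground : Nat.card (Ground e u) = 3 ^ (6 + e) := by
  have h := Subgroup.card_eq_card_quotient_mul_card_subgroup (derivedSeries (Cover e u) 2)
  rw [card_derivedSeries_cover_two, card_cover] at h
  exact Nat.eq_of_mul_eq_mul_right three_pos (h.symm.trans (by ring))

lemma nonempty_abelianization_ground :
    Nonempty (Abelianization (Ground e u) ≃* Multiplicative (ZMod (3 ^ e) × ZMod 3)) := by
  obtain ⟨f⟩ := nonempty_abelianization_cover (e := e) (u := u)
  obtain ⟨g⟩ := nonempty_abelianization_mulEquiv_abelianization
    (QuotientGroup.mk'_surjective (derivedSeries (Cover e u) 2)) (by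
      rw [QuotientGroup.ker_mk', ← derivedSeries_one]
      exact derivedSeries_antitone _ one_le_two)
  exact ⟨g.symm.trans f⟩

lemma β_eq_of_mul_eq {p q : Base} (r : ZMod 9)
    (h : p * Heisenberg.commutatorHom (ZMod 9) 3 (.ofAdd r) = q) : β e u p = β e u q := by
  refine QuotientGroup.eq.2 ?_
  rw [← h, map_mul, inv_mul_cancel_left, derivedSeries_cover_two, Heisenberg.commutator_eq_range]
  exact Subgroup.mem_map_of_mem _ ⟨_, rfl⟩

lemma x_pow : x e u ^ 3 ^ e = β e u ⟨0, 0, u⟩ := congrArg (QuotientGroup.mk' _) C4.x_pow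

lemma sgen_eq {j : ℕ} {b : Base} (h : sgen (C4.x e u) (C4.y e u) j = ι e u b) :
    sgen (x e u) (y e u) j = β e u b :=
  (map_sgen (QuotientGroup.mk' _) _ _ j).symm.trans (congrArg (QuotientGroup.mk' _) h)

lemma tgenD_eq {j : ℕ} {b : Base} (h : tgenD (C4.x e u) (C4.y e u) j = ι e u b) :
    tgenD (x e u) (y e u) j = β e u b :=
  (map_tgenD (QuotientGroup.mk' _) _ _ j).symm.trans (congrArg (QuotientGroup.mk' _) h)

lemma x_pow_pow_three : (x e u ^ 3 ^ e) ^ 3 = 1 := by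
  have hr : ∃ r : ZMod 9,
      ⟨0, 0, u⟩ ^ 3 * Heisenberg.commutatorHom (ZMod 9) 3 (.ofAdd r) = 1 := by
    revert u
    decide
  obtain ⟨r, hr⟩ := hr
  rw [x_pow, ← map_pow, β_eq_of_mul_eq r hr, map_one]

lemma y_pow_three : y e u ^ 3 = sgen (x e u) (y e u) 5 :=
  (congrArg (QuotientGroup.mk' _) C4.y_pow_three).trans (sgen_eq sgen_five).symm

lemma sgen_two_pow_three :
    sgen (x e u) (y e u) 2 ^ 3 = sgen (x e u) (y e u) 4 ^ 2 * sgen (x e u) (y e u) 5 := by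
  rw [sgen_eq sgen_two, sgen_eq sgen_four, sgen_eq sgen_five, ← map_pow, ← map_pow, ← map_mul]
  exact β_eq_of_mul_eq 2 (by decide)

lemma sgen_three_pow_three : sgen (x e u) (y e u) 3 ^ 3 = sgen (x e u) (y e u) 5 ^ 2 := by
  rw [sgen_eq sgen_three, sgen_eq sgen_five, ← map_pow, ← map_pow]
  exact β_eq_of_mul_eq 0 (by decide)

lemma tgenD_four : tgenD (x e u) (y e u) 4 = sgen (x e u) (y e u) 4 := by
  rw [tgenD_eq C4.tgenD_four, sgen_eq sgen_four]
  exact β_eq_of_mul_eq 1 (by decide)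

lemma tgenD_five : tgenD (x e u) (y e u) 5 = sgen (x e u) (y e u) 5 := by
  rw [tgenD_eq C4.tgenD_five, sgen_eq sgen_five]
  exact β_eq_of_mul_eq (-1) (by decide)

lemma tgenD_three {u : ℕ} (hu : ¬ 3 ∣ u) :
    tgenD (x e u) (y e u) 3 =
      sgen (x e u) (y e u) 3 * sgen (x e u) (y e u) 5 * (x e u ^ 3 ^ e) ^ u := by
  have hu9 : 3 * (u : ZMod 9) ≠ 0 := fun h ↦ by
    have h9 : 9 ∣ 3 * u := (ZMod.natCast_eq_zero_iff _ _).1 (by exact_mod_cast h)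
    omega
  have hsq : ∀ v : ZMod 9, 3 * v ≠ 0 → ∃ r : ZMod 9,
      (⟨0, 7, 1⟩ : Base) * Heisenberg.commutatorHom (ZMod 9) 3 (.ofAdd r) =
        ⟨0, 1, 0⟩ * ⟨0, 6, 0⟩ * ⟨0, 0, v * v⟩ := by
    decide
  have hw : (⟨0, 0, u⟩ : Base) ^ u = ⟨0, 0, u * u⟩ := by
    rw [← zpow_natCast, Heisenberg.zpow_def]
    simp
  obtain ⟨r, hr⟩ := hsq u hu9
  rw [tgenD_eq C4.tgenD_three, sgen_eq sgen_three, sgen_eq sgen_five, x_pow, ← map_pow, hw,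
    ← map_mul, ← map_mul]
  exact β_eq_of_mul_eq r hr

end Ground

end Cover

end C4

theorem stmt9_general (e u : ℕ) (he : e ≠ 0) (hu : ¬ 3 ∣ u) :
    ∃ (M : Type) (_ : Group M) (_ : Finite M) (x y : M),
      Subgroup.closure {x, y} = ⊤ ∧
      Nat.card M = 3 ^ (6 + e) ∧
      IsMetabelian M ∧
      IsSigmaGroup M ∧
      (x ^ 3 ^ e) ^ 3 = 1 ∧
      y ^ 3 = sgen x y 5 ∧
      sgen x y 2 ^ 3 = sgen x y 4 ^ 2 * sgen x y 5 ∧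
      sgen x y 3 ^ 3 = sgen x y 5 ^ 2 ∧
      tgenD x y 3 = sgen x y 3 * sgen x y 5 * (x ^ 3 ^ e) ^ u ∧
      tgenD x y 4 = sgen x y 4 ∧
      tgenD x y 5 = sgen x y 5 ∧
      Nonempty (Abelianization M ≃* Multiplicative (ZMod (3 ^ e) × ZMod 3)) ∧
      ∃ (G : Type) (_ : Group G) (_ : Finite G),
        Nat.card G = 3 ^ (7 + e) ∧
        Nonempty (Abelianization G ≃* Multiplicative (ZMod (3 ^ e) × ZMod 3)) ∧
        IsSigmaGroup G ∧
        derivedSeries G 2 ≠ ⊥ ∧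
        derivedSeries G 3 = ⊥ ∧
        ∃ φ : G →* M, Function.Surjective φ ∧ φ.ker = derivedSeries G 2 := by
  have : NeZero e := ⟨he⟩
  have hfinite : Finite (C4.Cover e u) :=
    Nat.finite_of_card_ne_zero (by rw [C4.card_cover]; positivity)
  have hnontrivial : derivedSeries (C4.Cover e u) 2 ≠ ⊥ := by
    rw [← Subgroup.one_lt_card_iff_ne_bot, C4.card_derivedSeries_cover_two]
    norm_num
  exact ⟨C4.Ground e u, inferInstance, inferInstance, C4.Ground.x e u, C4.Ground.y e u,
    C4.Ground.closure_x_y, C4.Ground.card_ground, isMetabelian_quotient_derivedSeries_two,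
    C4.isSigmaGroup_cover.quotient _, C4.Ground.x_pow_pow_three, C4.Ground.y_pow_three,
    C4.Ground.sgen_two_pow_three, C4.Ground.sgen_three_pow_three, C4.Ground.tgenD_three hu,
    C4.Ground.tgenD_four, C4.Ground.tgenD_five, C4.Ground.nonempty_abelianization_ground,
    C4.Cover e u, inferInstance, hfinite, C4.card_cover, C4.nonempty_abelianization_cover,
    C4.isSigmaGroup_cover, hnontrivial, C4.derivedSeries_cover_three, QuotientGroup.mk' _,
    QuotientGroup.mk'_surjective _, QuotientGroup.ker_mk' _⟩

theorem stmt9 (e i : ℕ) (he : 5 ≤ e) (hi : i = 2 ∨ i = 3) :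
    ∃ (M : Type) (_ : Group M) (_ : Finite M) (x y : M),
      Subgroup.closure {x, y} = ⊤ ∧
      Nat.card M = 3 ^ (6 + e) ∧
      IsMetabelian M ∧
      IsSigmaGroup M ∧
      (x ^ 3 ^ e) ^ 3 = 1 ∧
      y ^ 3 = sgen x y 5 ∧
      sgen x y 2 ^ 3 = sgen x y 4 ^ 2 * sgen x y 5 ∧
      sgen x y 3 ^ 3 = sgen x y 5 ^ 2 ∧
      tgenD x y 3 = sgen x y 3 * sgen x y 5 * (x ^ 3 ^ e) ^ (i - 1) ∧
      tgenD x y 4 = sgen x y 4 ∧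
      tgenD x y 5 = sgen x y 5 ∧
      Nonempty (Abelianization M ≃* Multiplicative (ZMod (3 ^ e) × ZMod 3)) ∧
      ∃ (G : Type) (_ : Group G) (_ : Finite G),
        Nat.card G = 3 ^ (7 + e) ∧
        Nonempty (Abelianization G ≃* Multiplicative (ZMod (3 ^ e) × ZMod 3)) ∧
        IsSigmaGroup G ∧
        derivedSeries G 2 ≠ ⊥ ∧
        derivedSeries G 3 = ⊥ ∧
        ∃ φ : G →* M, Function.Surjective φ ∧ φ.ker = derivedSeries G 2 :=
  stmt9_general e (i - 1) (by omega) (by omega)
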